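/- arXiv:1205.2116 — 2 statements merged into one kernel-verified Lean document; each statement's English description precedes it below -/
import Mathlib

section
/- Let R be a Noetherian ring with a ring automorphism σ, let Q and P be prime ideals of R, and let A be an ideal of R such that there is a link Q ⇝ P via A. Suppose n ≥ 1 is an integer with σⁿ(Q) = Q, σⁿ(P) = P, and σⁿ(A) = A, and set Q⁰ = ⋂_{i=0}^{n-1} σⁱ(Q), P⁰ = ⋂_{i=0}^{n-1} σⁱ(P), A⁰ = ⋂_{i=0}^{n-1} σⁱ(A). Then A⁰ ≠ Q⁰ ∩ P⁰; that is, A⁰ is strictly contained in Q⁰ ∩ P⁰. -/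
variable {R : Type*}

/-- The image of a two-sided ideal under a ring automorphism `σ`
(an element is in `σ(I)` iff its preimage under `σ` is in `I`). -/
def TwoSidedIdeal.mapEquiv [Ring R] (σ : R ≃+* R) (I : TwoSidedIdeal R) : TwoSidedIdeal R :=
  I.comap (σ.symm : R ≃+* R)

/-- A two-sided ideal `P ⊊ R` is prime: whenever `a R b ⊆ P`, either `a ∈ P` or `b ∈ P`. -/
def TwoSidedIdeal.IsPrime [Ring R] (P : TwoSidedIdeal R) : Prop :=
  P ≠ ⊤ ∧ ∀ a b : R, (∀ r : R, a * r * b ∈ P) → a ∈ P ∨ b ∈ P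

/-- `g` is regular modulo `P`, i.e. the image of `g` in `R/P` is a non-zero-divisor. -/
def RegularMod [Ring R] (P : TwoSidedIdeal R) (g : R) : Prop :=
  (∀ r : R, g * r ∈ P → r ∈ P) ∧ (∀ r : R, r * g ∈ P → r ∈ P)

/-- There is a link `Q ⇝ P` via the ideal `A`: `Q·P ⊆ A ⊊ Q ∩ P` and `(Q ∩ P)/A` is
torsionfree as a right `R/P`-module and as a left `R/Q`-module. -/
def LinkVia [Ring R] (Q P A : TwoSidedIdeal R) : Prop :=
  (∀ q ∈ Q, ∀ p ∈ P, q * p ∈ A) ∧ A < Q ⊓ P ∧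
  ∀ f ∈ Q ⊓ P, f ∉ A →
    (∀ g : R, RegularMod P g → f * g ∉ A) ∧
    (∀ g : R, RegularMod Q g → g * f ∉ A)

section GoldieAux

/-- right annihilator of `a`, as a left ideal of the opposite ring -/
def auxRann {S : Type*} [Ring S] (a : S) : Ideal Sᵐᵒᵖ where
  carrier := {x | a * x.unop = 0}
  add_mem' := by
    intro x y hx hy
    simp only [Set.mem_ofPred_eq] at *
    simp [mul_add, hx, hy]
  zero_mem' := by simp
  smul_mem' := by
    intro c x hx
    simp only [Set.mem_ofPred_eq] at *
    simp [← mul_assoc, hx]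

theorem mem_auxRann {S : Type*} [Ring S] (a : S) (x : Sᵐᵒᵖ) :
    x ∈ auxRann a ↔ a * x.unop = 0 := Iff.rfl

/-- left annihilator of the right annihilator of `c` -/
def auxLr {S : Type*} [Ring S] (c : S) : Ideal S where
  carrier := {x | ∀ y, c * y = 0 → x * y = 0}
  add_mem' := by
    intro x y hx hy z hz
    simp [add_mul, hx z hz, hy z hz]
  zero_mem' := by simp
  smul_mem' := by
    intro c x hx z hz
    simp [mul_assoc, hx z hz]

theorem mem_auxLr {S : Type*} [Ring S] (c x : S) :
    x ∈ auxLr c ↔ ∀ y, c * y = 0 → x * y = 0 := Iff.rfl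

theorem aux_nonnil {S : Type*} [Ring S] [IsNoetherianRing Sᵐᵒᵖ]
    (hp : ∀ a b : S, (∀ r, a * r * b = 0) → a = 0 ∨ b = 0) (x : S) (hx : x ≠ 0) :
    ∃ s, ¬ IsNilpotent (s * x) := by
  by_contra hcon
  push Not at hcon
  obtain ⟨M, ⟨a, ⟨s, rfl⟩, ha0, rfl⟩, hmax⟩ := set_has_maximal_iff_noetherian.mpr
    (inferInstanceAs (IsNoetherian Sᵐᵒᵖ Sᵐᵒᵖ))
    {M : Ideal Sᵐᵒᵖ | ∃ a, (∃ s, a = s * x) ∧ a ≠ 0 ∧ M = auxRann a}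
    ⟨_, x, ⟨1, by simp⟩, hx, rfl⟩
  have key : ∀ r, (s * x) * r * (s * x) = 0 := by
    intro r
    by_cases h0 : r * (s * x) = 0
    · rw [mul_assoc, h0, mul_zero]
    set u := r * (s * x) with hu
    have hnil : IsNilpotent u := by
      have := hcon (r * s)
      rwa [mul_assoc] at this
    have hnt : Nontrivial S := ⟨⟨_, _, hx⟩⟩
    have hcl := pow_nilpotencyClass hnil
    have hpos := pos_nilpotencyClass_iff.mpr hnil
    obtain ⟨k, hk⟩ : ∃ k, nilpotencyClass u = k + 1 := ⟨nilpotencyClass u - 1, by omega⟩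
    have hk0 : u ^ k ≠ 0 := by
      intro h
      have : nilpotencyClass u ≤ k := Nat.sInf_le h
      omega
    have hk1 : u ^ k * u = 0 := by rw [← pow_succ, ← hk]; exact hcl
    have hkpos : k ≠ 0 := by
      rintro rfl
      apply h0
      simpa using hk1
    obtain ⟨l, rfl⟩ := Nat.exists_eq_succ_of_ne_zero hkpos
    have hform : u ^ (l + 1) = (u ^ l * r) * (s * x) := by
      rw [pow_succ, mul_assoc]
    have hle : auxRann (s * x) ≤ auxRann (u ^ (l + 1)) := by
      intro y hy
      rw [mem_auxRann] at *
      rw [hform, mul_assoc, hy, mul_zero]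
    have hnlt := hmax (auxRann (u ^ (l + 1)))
      ⟨_, ⟨u ^ l * r * s, by rw [hform]; simp only [mul_assoc]⟩, hk0, rfl⟩
    have heq : auxRann (s * x) = auxRann (u ^ (l + 1)) := by
      by_contra hne
      exact hnlt (lt_of_le_of_ne hle hne)
    have hmem : MulOpposite.op u ∈ auxRann (s * x) := by
      rw [heq, mem_auxRann]; exact hk1
    rw [mem_auxRann] at hmem
    rw [mul_assoc]; exact hmem
  rcases hp _ _ key with h | h <;> exact ha0 h

theorem aux_power {S : Type*} [Ring S] [IsNoetherianRing Sᵐᵒᵖ] (u : S)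
    (hu : ¬ IsNilpotent u) :
    ∃ k, u ^ (k + 1) ≠ 0 ∧ ∀ y, u ^ (k + 1) * (u ^ (k + 1) * y) = 0 → u ^ (k + 1) * y = 0 := by
  let f : ℕ →o Ideal Sᵐᵒᵖ := ⟨fun n => auxRann (u ^ n), by
    apply monotone_nat_of_le_succ
    intro n y hy
    rw [mem_auxRann] at *
    rw [pow_succ', mul_assoc, hy, mul_zero]⟩
  obtain ⟨n, hn⟩ := monotone_stabilizes_iff_noetherian.mpr
    (inferInstanceAs (IsNoetherian Sᵐᵒᵖ Sᵐᵒᵖ)) f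
  refine ⟨n, fun h => hu ⟨_, h⟩, fun y hy => ?_⟩
  rw [← mul_assoc, ← pow_add] at hy
  have h1 : f (n + 1 + (n + 1)) = f (n + 1) := by
    rw [← hn (n + 1) (by omega), ← hn (n + 1 + (n + 1)) (by omega)]
  have h2 : MulOpposite.op y ∈ f (n + 1 + (n + 1)) := hy
  rw [h1] at h2
  exact h2

theorem aux_left {S : Type*} [Ring S] [IsNoetherianRing S] [IsNoetherianRing Sᵐᵒᵖ]
    (hp : ∀ a b : S, (∀ r, a * r * b = 0) → a = 0 ∨ b = 0)
    (I : Set S) (h0 : (0 : S) ∈ I) (hadd : ∀ a ∈ I, ∀ b ∈ I, a + b ∈ I)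
    (hl : ∀ a, ∀ b ∈ I, a * b ∈ I) (hr : ∀ a ∈ I, ∀ b, a * b ∈ I)
    (i : S) (hi : i ∈ I) (hi0 : i ≠ 0) :
    ∃ c ∈ I, ∀ y, c * y = 0 → y = 0 := by
  obtain ⟨M, ⟨c, hcI, hc2, rfl⟩, hmax⟩ := set_has_maximal_iff_noetherian.mpr
    (inferInstanceAs (IsNoetherian S S))
    {M : Ideal S | ∃ c ∈ I, (∀ y, c * (c * y) = 0 → c * y = 0) ∧ M = auxLr c}
    ⟨_, 0, h0, by simp, rfl⟩
  refine ⟨c, hcI, fun y hy => ?_⟩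
  by_contra hy0
  obtain ⟨r, hr0⟩ : ∃ r, y * r * i ≠ 0 := by
    by_contra hcon
    push Not at hcon
    rcases hp _ _ hcon with h | h
    · exact hy0 h
    · exact hi0 h
  set x := y * r * i with hx
  have hxI : x ∈ I := hl _ _ hi
  have hcx : c * x = 0 := by rw [hx, ← mul_assoc, ← mul_assoc, hy]; simp
  obtain ⟨s, hs⟩ := aux_nonnil hp x hr0
  have hs' : ¬ IsNilpotent (x * s) := by
    rintro ⟨k, hk⟩
    apply hs
    refine ⟨k + 1, ?_⟩
    have : ∀ k, (s * x) ^ (k + 1) = s * (x * s) ^ k * x := by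
      intro k
      induction k with
      | zero => simp
      | succ k ih => rw [pow_succ, ih, pow_succ]; simp only [mul_assoc]
    rw [this, hk]; simp
  obtain ⟨k, ha0, ha2⟩ := aux_power _ hs'
  set a := (x * s) ^ (k + 1) with ha
  have haform : a = x * (s * (x * s) ^ k) := by rw [ha, pow_succ', mul_assoc]
  have haI : a ∈ I := by rw [haform]; exact hr _ hxI _
  have hca : c * a = 0 := by rw [haform, ← mul_assoc, hcx, zero_mul]
  have hca' : ∀ y, c * (a * y) = 0 := fun y => by rw [← mul_assoc, hca, zero_mul]
  have hker : ∀ y, (c + a) * y = 0 → c * y = 0 ∧ a * y = 0 := by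
    intro y hy
    have h1 : c * y = 0 := by
      apply hc2
      have : c * ((c + a) * y) = 0 := by rw [hy, mul_zero]
      rwa [add_mul, mul_add, hca', add_zero] at this
    refine ⟨h1, ?_⟩
    rwa [add_mul, h1, zero_add] at hy
  apply hmax (auxLr (c + a))
  · refine ⟨c + a, hadd _ hcI _ haI, ?_, rfl⟩
    intro y hy
    obtain ⟨h1, h2⟩ := hker _ hy
    have h3 : c * y = 0 := by
      apply hc2
      rwa [add_mul, mul_add, hca', add_zero] at h1
    rw [add_mul, h3, zero_add] at h2 ⊢
    exact ha2 _ h2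
  · refine lt_of_le_of_ne ?_ ?_
    · intro z hz
      rw [mem_auxLr] at *
      exact fun y hy => hz y (hker y hy).1
    · intro heq
      have h1 : c + a ∈ auxLr c := by
        rw [heq, mem_auxLr]; exact fun y hy => hy
      have h2 := (mem_auxLr _ _).1 h1 a hca
      rw [add_mul, hca, zero_add] at h2
      apply ha0
      have := ha2 1
      simp only [mul_one] at this
      exact this h2

theorem aux_ess {S : Type*} [Ring S] [IsNoetherianRing Sᵐᵒᵖ] (c : S)
    (hc : ∀ y, c * y = 0 → y = 0) (z : S) (hz : ∀ s t, z * s = c * t → z * s = 0) : z = 0 := by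
  have hcm : ∀ m y, c ^ m * y = 0 → y = 0 := by
    intro m
    induction m with
    | zero => simp
    | succ m ih =>
      intro y hy
      rw [pow_succ, mul_assoc] at hy
      exact hc _ (ih _ hy)
  obtain ⟨X, ⟨m, hm⟩, hmax⟩ := set_has_maximal_iff_noetherian.mpr
    (inferInstanceAs (IsNoetherian Sᵐᵒᵖ Sᵐᵒᵖ))
    {X : Ideal Sᵐᵒᵖ | ∃ m : ℕ, ∀ x ∈ X, ∀ t, x.unop = c ^ m * t → x = 0}
    ⟨⊥, 0, by simp⟩
  let Y : Ideal Sᵐᵒᵖ :=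
    { carrier := {w | ∃ x ∈ X, ∃ y ∈ X, w.unop = x.unop + c ^ m * y.unop}
      add_mem' := by
        rintro _ _ ⟨x, hx, y, hy, h⟩ ⟨x', hx', y', hy', h'⟩
        refine ⟨_, X.add_mem hx hx', _, X.add_mem hy hy', ?_⟩
        simp only [MulOpposite.unop_add, h, h', mul_add]
        abel
      zero_mem' := ⟨0, X.zero_mem, 0, X.zero_mem, by simp⟩
      smul_mem' := by
        rintro r _ ⟨x, hx, y, hy, h⟩
        refine ⟨_, X.smul_mem r hx, _, X.smul_mem r hy, ?_⟩
        simp only [smul_eq_mul, MulOpposite.unop_mul, h, add_mul, mul_assoc] }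
  have hXY : X ≤ Y := fun x hx => ⟨x, hx, 0, X.zero_mem, by simp⟩
  have hYmem : Y ∈ {X : Ideal Sᵐᵒᵖ | ∃ m : ℕ, ∀ x ∈ X, ∀ t, x.unop = c ^ m * t → x = 0} := by
    refine ⟨m + m, ?_⟩
    rintro w ⟨x, hx, y, hy, h⟩ t ht
    have h1 : x = 0 := by
      apply hm x hx (c ^ m * t - y.unop)
      rw [mul_sub, ← mul_assoc, ← pow_add, ← ht, h]; abel
    subst h1
    have h2 : y = 0 := by
      apply hm y hy t
      have : c ^ m * (y.unop - c ^ m * t) = 0 := by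
        rw [mul_sub, ← mul_assoc, ← pow_add, ← ht, h]; simp
      exact sub_eq_zero.1 (hcm _ _ this)
    subst h2
    apply MulOpposite.unop_injective
    simpa using h
  have hYX : Y = X := by
    by_contra hne
    exact hmax Y hYmem (lt_of_le_of_ne hXY (Ne.symm hne))
  have hX0 : X = ⊥ := by
    rw [eq_bot_iff]
    intro x hx
    have h1 : MulOpposite.op (c ^ m * x.unop) ∈ X := by
      rw [← hYX]
      exact ⟨0, X.zero_mem, x, hx, by simp⟩
    have h2 := hm _ h1 x.unop rfl
    have h3 : c ^ m * x.unop = 0 := by simpa using congrArg MulOpposite.unop h2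
    have := hcm _ _ h3
    simpa using this
  by_contra hz0
  refine hmax (Ideal.span {MulOpposite.op z}) ⟨1, ?_⟩ ?_
  · intro x hx t ht
    obtain ⟨a, rfl⟩ := Ideal.mem_span_singleton'.1 hx
    apply MulOpposite.unop_injective
    simp only [MulOpposite.unop_mul, MulOpposite.unop_op, pow_one, MulOpposite.unop_zero] at *
    exact hz _ _ ht
  · rw [hX0, bot_lt_iff_ne_bot]
    intro h
    rw [Ideal.span_singleton_eq_bot] at h
    exact hz0 (by simpa using h)

theorem aux_goldie {S : Type*} [Ring S] [IsNoetherianRing S] [IsNoetherianRing Sᵐᵒᵖ]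
    (hp : ∀ a b : S, (∀ r, a * r * b = 0) → a = 0 ∨ b = 0)
    (I : Set S) (h0 : (0 : S) ∈ I) (hadd : ∀ a ∈ I, ∀ b ∈ I, a + b ∈ I)
    (hl : ∀ a, ∀ b ∈ I, a * b ∈ I) (hr : ∀ a ∈ I, ∀ b, a * b ∈ I)
    (i : S) (hi : i ∈ I) (hi0 : i ≠ 0) :
    ∃ c ∈ I, (∀ y, c * y = 0 → y = 0) ∧ (∀ y, y * c = 0 → y = 0) := by
  obtain ⟨c, hcI, hc⟩ := aux_left hp I h0 hadd hl hr i hi hi0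
  refine ⟨c, hcI, hc, fun x hx => ?_⟩
  by_contra hx0
  obtain ⟨s, hs⟩ := aux_nonnil hp x hx0
  obtain ⟨k, hz0, hz2⟩ := aux_power _ hs
  apply hz0
  apply aux_ess c hc
  intro a b hab
  apply hz2
  rw [hab, pow_succ]
  have : (s * x) * (c * b) = 0 := by
    rw [mul_assoc, ← mul_assoc x, hx]; simp
  rw [mul_assoc, this, mul_zero]

theorem aux_regular {R : Type*} [Ring R] [IsNoetherianRing R] [IsNoetherianRing Rᵐᵒᵖ]
    (P J : TwoSidedIdeal R) (hP : P.IsPrime) (x : R) (hxJ : x ∈ J) (hxP : x ∉ P) :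
    ∃ g ∈ J, RegularMod P g := by
  let π : R →+* P.ringCon.Quotient := P.ringCon.mk'
  have hπ : Function.Surjective π := P.ringCon.mk'_surjective
  have hker : ∀ r, π r = 0 ↔ r ∈ P := by
    intro r
    rw [TwoSidedIdeal.mem_iff]
    exact (RingCon.eq P.ringCon)
  have i1 : IsNoetherianRing P.ringCon.Quotient := isNoetherianRing_of_surjective _ _ π hπ
  have i2 : IsNoetherianRing P.ringCon.Quotientᵐᵒᵖ :=
    isNoetherianRing_of_surjective _ _ (RingHom.op π) (by
      intro y
      obtain ⟨r, hr⟩ := hπ y.unop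
      exact ⟨MulOpposite.op r, by simp [hr]⟩)
  obtain ⟨c, ⟨g, hgJ, rfl⟩, h1, h2⟩ := aux_goldie (S := P.ringCon.Quotient) (by
      intro a b hab
      obtain ⟨a, rfl⟩ := hπ a
      obtain ⟨b, rfl⟩ := hπ b
      rw [hker, hker]
      apply hP.2
      intro r
      rw [← hker, map_mul, map_mul]
      exact hab _) (Set.image π {x | x ∈ J}) ⟨0, J.zero_mem, map_zero _⟩
      (by
        rintro _ ⟨a, ha, rfl⟩ _ ⟨b, hb, rfl⟩
        exact ⟨a + b, J.add_mem ha hb, map_add _ _ _⟩)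
      (by
        rintro a _ ⟨b, hb, rfl⟩
        obtain ⟨a, rfl⟩ := hπ a
        exact ⟨a * b, J.mul_mem_left _ _ hb, map_mul _ _ _⟩)
      (by
        rintro _ ⟨b, hb, rfl⟩ a
        obtain ⟨a, rfl⟩ := hπ a
        exact ⟨b * a, J.mul_mem_right _ _ hb, map_mul _ _ _⟩)
      (π x) ⟨x, hxJ, rfl⟩ (by rwa [Ne, hker])
  refine ⟨g, hgJ, ?_, ?_⟩
  · intro r hr
    rw [← hker] at hr ⊢
    exact h1 _ (by rwa [map_mul] at hr)
  · intro r hr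
    rw [← hker] at hr ⊢
    exact h2 _ (by rwa [map_mul] at hr)

theorem mem_auxMapEquiv {R : Type*} [Ring R] (τ : R ≃+* R) (I : TwoSidedIdeal R) (x : R) :
    x ∈ TwoSidedIdeal.mapEquiv τ I ↔ τ.symm x ∈ I := by
  unfold TwoSidedIdeal.mapEquiv
  rw [TwoSidedIdeal.mem_comap]

theorem aux_incomp {R : Type*} [Ring R] (σ : R ≃+* R) (P : TwoSidedIdeal R) (n : ℕ)
    (hn : 1 ≤ n) (hPn : TwoSidedIdeal.mapEquiv (σ ^ n) P = P) (i : ℕ)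
    (hi : TwoSidedIdeal.mapEquiv (σ ^ i) P ≤ P) : TwoSidedIdeal.mapEquiv (σ ^ i) P = P := by
  have h1 : ∀ y ∈ P, (σ ^ i) y ∈ P := fun y hy =>
    hi ((mem_auxMapEquiv _ _ _).2 (by rwa [RingEquiv.symm_apply_apply]))
  have h2 : ∀ k, ∀ y ∈ P, ((σ ^ i) ^ k) y ∈ P := by
    intro k
    induction k with
    | zero => intro y hy; simpa using hy
    | succ k ih =>
      intro y hy
      rw [pow_succ]
      exact ih _ (h1 _ hy)
  have h3 : ∀ y ∈ P, (σ ^ n).symm y ∈ P := fun y hy =>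
    (mem_auxMapEquiv _ _ _).1 (by rwa [hPn])
  have h4 : ∀ k, ∀ y ∈ P, ((σ ^ n) ^ k).symm y ∈ P := by
    intro k
    induction k with
    | zero => intro y hy; exact hy
    | succ k ih =>
      intro y hy
      rw [pow_succ']
      exact ih _ (h3 _ hy)
  refine le_antisymm hi ?_
  intro x hx
  rw [mem_auxMapEquiv]
  have h5 := h2 (n - 1) _ (h4 i x hx)
  convert h5 using 1
  apply (σ ^ i).injective
  obtain ⟨m, rfl⟩ : ∃ m, n = m + 1 := ⟨n - 1, by omega⟩
  have e : (σ ^ i) * (σ ^ i) ^ m = (σ ^ (m + 1)) ^ i := by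
    rw [← pow_succ', ← pow_mul, ← pow_mul, mul_comm]
  have e2 := DFunLike.congr_fun e (((σ ^ (m + 1)) ^ i).symm x)
  rw [RingEquiv.apply_symm_apply] at e2 ⊢
  exact e2.symm

theorem aux_avoid {R : Type*} [Ring R] (P : TwoSidedIdeal R) (hP : P.IsPrime)
    (F : ℕ → TwoSidedIdeal R) (s : Finset ℕ) (hF : ∀ i ∈ s, ¬ F i ≤ P) :
    ∃ x, x ∉ P ∧ ∀ i ∈ s, x ∈ F i := by
  classical
  induction s using Finset.induction_on with
  | empty =>
    refine ⟨1, fun h => hP.1 ?_, by simp⟩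
    rw [eq_top_iff]
    intro y _
    simpa using P.mul_mem_left y 1 h
  | insert j s hj ih =>
    obtain ⟨x, hx, hxs⟩ := ih fun i hi => hF i (Finset.mem_insert_of_mem hi)
    obtain ⟨y, hyF, hyP⟩ : ∃ y, y ∈ F j ∧ y ∉ P := by
      by_contra hcon
      push Not at hcon
      exact hF j (Finset.mem_insert_self _ _) fun y hy => hcon y hy
    by_contra hcon
    push Not at hcon
    have : ∀ r, x * r * y ∈ P := by
      intro r
      by_contra hr
      obtain ⟨i, hi, hni⟩ := hcon _ hr
      rcases Finset.mem_insert.1 hi with rfl | hi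
      · exact hni ((F i).mul_mem_left _ _ hyF)
      · exact hni ((F i).mul_mem_right _ _ ((F i).mul_mem_right _ _ (hxs i hi)))
    rcases hP.2 _ _ this with h | h
    · exact hx h
    · exact hyP h

theorem aux_mem_biInf {R : Type*} [Ring R] (F : ℕ → TwoSidedIdeal R) (s : Finset ℕ) (x : R) :
    x ∈ (⨅ i ∈ s, F i) ↔ ∀ i ∈ s, x ∈ F i := by
  have h1 : ∀ i, x ∈ (⨅ (_ : i ∈ s), F i) ↔ (i ∈ s → x ∈ F i) := by
    intro i
    by_cases h : i ∈ s
    · simp [h]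
    · simp only [h, iInf_false, false_imp_iff, iff_true]
      trivial
  rw [TwoSidedIdeal.mem_iInf]
  exact forall_congr' h1

theorem aux_main {R : Type*} [Ring R] [IsNoetherianRing R] [IsNoetherianRing Rᵐᵒᵖ]
    (σ : R ≃+* R) (P : TwoSidedIdeal R) (hP : P.IsPrime) (n : ℕ)
    (hn : 1 ≤ n) (hPn : TwoSidedIdeal.mapEquiv (σ ^ n) P = P) :
    ∃ g, RegularMod P g ∧ ∀ f ∈ P, ∀ a,
      f * g ∈ (⨅ i ∈ Finset.range n, TwoSidedIdeal.mapEquiv (σ ^ i) P) ∧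
      g * f * a ∈ (⨅ i ∈ Finset.range n, TwoSidedIdeal.mapEquiv (σ ^ i) P) := by
  classical
  let F := fun i : ℕ => TwoSidedIdeal.mapEquiv (σ ^ i) P
  let s := (Finset.range n).filter fun i => F i ≠ P
  obtain ⟨x, hxP, hx⟩ := aux_avoid P hP F s (by
    intro i hi hle
    exact (Finset.mem_filter.1 hi).2 (aux_incomp σ P n hn hPn i hle))
  obtain ⟨g, hgJ, hg⟩ := aux_regular P (⨅ i ∈ s, F i) hP x ((aux_mem_biInf _ _ _).2 hx) hxP
  rw [aux_mem_biInf] at hgJ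
  refine ⟨g, hg, fun f hf a => ⟨?_, ?_⟩⟩
  all_goals
    rw [aux_mem_biInf]
    intro i hi
    change _ ∈ F i
    by_cases h : F i = P
    · rw [h]
      first
        | exact P.mul_mem_right _ _ hf
        | exact P.mul_mem_right _ _ (P.mul_mem_left _ _ hf)
    · have := hgJ i (Finset.mem_filter.2 ⟨hi, h⟩)
      first
        | exact (F i).mul_mem_left _ _ this
        | exact (F i).mul_mem_right _ _ ((F i).mul_mem_right _ _ this)

end GoldieAux

/-- for a link `Q ⇝ P` via `A` with `σⁿ(Q)=Q`, `σⁿ(P)=P`, `σⁿ(A)=A`, the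
σ-invariant part `A⁰` is strictly contained in `Q⁰ ∩ P⁰`. -/
theorem invariant_part_strictly_smaller [Ring R] [IsNoetherianRing R] [IsNoetherianRing Rᵐᵒᵖ]
    (σ : R ≃+* R) (Q P A : TwoSidedIdeal R) (hQ : Q.IsPrime) (hP : P.IsPrime)
    (h : LinkVia Q P A) (n : ℕ) (hn : 1 ≤ n)
    (hQn : TwoSidedIdeal.mapEquiv (σ ^ n) Q = Q)
    (hPn : TwoSidedIdeal.mapEquiv (σ ^ n) P = P)
    (hAn : TwoSidedIdeal.mapEquiv (σ ^ n) A = A)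
    (Q0 P0 A0 : TwoSidedIdeal R)
    (hQ0 : Q0 = ⨅ i ∈ Finset.range n, TwoSidedIdeal.mapEquiv (σ ^ i) Q)
    (hP0 : P0 = ⨅ i ∈ Finset.range n, TwoSidedIdeal.mapEquiv (σ ^ i) P)
    (hA0 : A0 = ⨅ i ∈ Finset.range n, TwoSidedIdeal.mapEquiv (σ ^ i) A) :
    A0 < Q0 ⊓ P0 := by
  obtain ⟨hQP, hlt, htf⟩ := h
  obtain ⟨g, hg, hgQ⟩ := aux_main σ Q hQ n hn hQn
  obtain ⟨k, hk, hkP⟩ := aux_main σ P hP n hn hPn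
  rw [← hQ0] at hgQ
  rw [← hP0] at hkP
  have hmono : ∀ B : TwoSidedIdeal R, A ≤ B → A0 ≤ ⨅ i ∈ Finset.range n,
      TwoSidedIdeal.mapEquiv (σ ^ i) B := by
    intro B hAB x hx
    rw [hA0, aux_mem_biInf] at hx
    rw [aux_mem_biInf]
    intro i hi
    have := hx i hi
    rw [mem_auxMapEquiv] at this ⊢
    exact hAB this
  have hA : A0 ≤ A := by
    intro x hx
    rw [hA0, aux_mem_biInf] at hx
    have := hx 0 (Finset.mem_range.2 (by omega))
    rw [mem_auxMapEquiv] at this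
    exact this
  refine lt_of_le_of_ne (le_inf ?_ ?_) ?_
  · rw [hQ0]; exact hmono Q (hlt.le.trans inf_le_left)
  · rw [hP0]; exact hmono P (hlt.le.trans inf_le_right)
  · intro heq
    apply not_le_of_gt hlt
    intro f hf
    by_contra hfA
    have hfQ : f ∈ Q := (inf_le_left : Q ⊓ P ≤ Q) hf
    have hfP : f ∈ P := (inf_le_right : Q ⊓ P ≤ P) hf
    have h1 := (htf f hf hfA).2 g hg
    have h2 := (htf (g * f) ((Q ⊓ P).mul_mem_left _ _ hf) h1).1 k hk
    apply h2
    apply hA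
    rw [heq, TwoSidedIdeal.mem_inf]
    exact ⟨(hgQ f hfQ k).2, (hkP (g * f) (P.mul_mem_left _ _ hfP) 0).1⟩
end

section
/- Let R be a Noetherian ring with a ring automorphism σ, and let Q and P be σ-semistable prime ideals of R, with σ-invariant parts Q⁰ and P⁰ (taken with respect to a common integer n ≥ 1 satisfying σⁿ(Q) = Q and σⁿ(P) = P). If there is a link Q⁰ ⇝ P⁰ (i.e., there is an ideal A with Q⁰·P⁰ ⊆ A ⊊ Q⁰ ∩ P⁰ such that (Q⁰ ∩ P⁰)/A is torsionfree as a right R/P⁰-module and as a left R/Q⁰-module), then for every integer i ≥ 0 there exists an integer j ≥ 0 such that there is a link σⁱ(Q) ⇝ σʲ(P) of prime ideals. -/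
variable {R : Type*}

section Goldie

theorem exists_max_ideal {S : Type*} [Ring S] [IsNoetherianRing S] {α : Type*} (F : α → Ideal S)
    (p : α → Prop) (h : ∃ a, p a) :
    ∃ a, p a ∧ ∀ b, p b → F a ≤ F b → F b ≤ F a := by
  obtain ⟨a0, ha0⟩ := h
  obtain ⟨M, ⟨a, ha, rfl⟩, hM⟩ := set_has_maximal_iff_noetherian.mpr
    (inferInstance : IsNoetherian S S) {M | ∃ a, p a ∧ F a = M} ⟨F a0, a0, ha0, rfl⟩
  refine ⟨a, ha, fun b hb hab => ?_⟩
  by_contra hc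
  exact hM (F b) ⟨b, hb, rfl⟩ (lt_of_le_not_ge hab hc)

/-- left annihilator -/
def lAnn {S : Type*} [Ring S] (a : S) : Ideal S where
  carrier := {x | x * a = 0}
  zero_mem' := by simp
  add_mem' := by
    intro x y hx hy
    simp only [Set.mem_ofPred_eq] at *
    rw [add_mul, hx, hy, add_zero]
  smul_mem' := by
    intro c x hx
    simp only [Set.mem_ofPred_eq, smul_eq_mul] at *
    rw [mul_assoc, hx, mul_zero]

theorem mem_lAnn {S : Type*} [Ring S] {a x : S} : x ∈ lAnn a ↔ x * a = 0 := Iff.rfl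

/-- right annihilator of the left annihilator -/
def rlAnn {S : Type*} [Ring S] (a : S) : Ideal Sᵐᵒᵖ where
  carrier := {x | ∀ y, y * a = 0 → y * x.unop = 0}
  zero_mem' := by simp
  add_mem' := by
    intro x y hx hy z hz
    rw [MulOpposite.unop_add, mul_add, hx z hz, hy z hz, add_zero]
  smul_mem' := by
    intro c x hx z hz
    rw [smul_eq_mul, MulOpposite.unop_mul, ← mul_assoc, hx z hz, zero_mul]

theorem mem_rlAnn {S : Type*} [Ring S] {a : S} {x : Sᵐᵒᵖ} :
    x ∈ rlAnn a ↔ ∀ y, y * a = 0 → y * x.unop = 0 := Iff.rfl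

/-- essential left ideals, elementwise -/
def EssL {S : Type*} [Ring S] (E : Ideal S) : Prop :=
  ∀ s : S, s ≠ 0 → ∃ r, r * s ≠ 0 ∧ r * s ∈ E

theorem essL_principal {S : Type*} [Ring S] [IsNoetherianRing S] (g : S)
    (hg : ∀ r, r * g = 0 → r = 0) (s : S) (hs : s ≠ 0) :
    ∃ r u, r * s ≠ 0 ∧ r * s = u * g := by
  by_contra! hcon
  let f : S × (Ideal.span {s} : Ideal S) →ₗ[S] S :=
    LinearMap.coprod (LinearMap.toSpanSingleton S S g) (Submodule.subtype _)
  have hf : Function.Injective f := by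
    rw [injective_iff_map_eq_zero]
    rintro ⟨a, b, hb⟩ h
    obtain ⟨r, rfl⟩ := Ideal.mem_span_singleton'.mp hb
    have h' : a * g + r * s = 0 := by simpa [f] using h
    have h2 : r * s = (-a) * g := by
      rw [neg_mul]; exact eq_neg_of_add_eq_zero_right h'
    have h3 : r * s = 0 := by
      by_contra h4
      exact hcon r (-a) h4 h2
    have h5 : a = 0 := hg a (by rw [h3, add_zero] at h'; exact h')
    simp [h5, h3]
  have e := IsNoetherian.equivPUnitOfProdInjective f hf
  have : (⟨s, Ideal.mem_span_singleton_self s⟩ : (Ideal.span {s} : Ideal S)) = 0 :=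
    e.injective (Subsingleton.elim _ _)
  exact hs (congrArg Subtype.val this)

variable {S : Type*} [Ring S] [IsNoetherianRing S]

theorem singular_eq_zero (hS : ∀ a : S, (∀ r, a * r * a = 0) → a = 0) (z : S)
    (hz : EssL (lAnn z)) : z = 0 := by
  by_contra hne
  obtain ⟨w, ⟨hw, hw0⟩, hmax⟩ := exists_max_ideal (fun z : S => lAnn z)
    (fun z => EssL (lAnn z) ∧ z ≠ 0) ⟨z, hz, hne⟩
  apply hw0
  apply hS
  intro r
  have h1 : EssL (lAnn (r * w)) := by
    intro s hs
    by_cases h : s * r = 0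
    · exact ⟨1, by simpa using hs, by rw [mem_lAnn, one_mul, ← mul_assoc, h, zero_mul]⟩
    · obtain ⟨t, ht, ht'⟩ := hw _ h
      refine ⟨t, fun h0 => ht (by rw [← mul_assoc, h0, zero_mul]), ?_⟩
      rw [mem_lAnn] at *
      simpa only [mul_assoc] using ht'
  obtain ⟨t, ht, ht'⟩ := h1 w hw0
  by_contra h2
  have hle : lAnn w ≤ lAnn (w * r * w) := by
    intro x hx
    rw [mem_lAnn] at *
    rw [mul_assoc, ← mul_assoc, hx, zero_mul]
  have h3 : EssL (lAnn (w * r * w)) := fun s hs => by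
    obtain ⟨r', a, b⟩ := hw s hs
    exact ⟨r', a, hle b⟩
  have h4 := hmax (w * r * w) ⟨h3, h2⟩ hle
  have h5 : t ∈ lAnn (w * r * w) := by
    rw [mem_lAnn] at *
    simpa only [mul_assoc] using ht'
  exact ht (h4 h5)

theorem exists_nonnil (hS : ∀ a : S, (∀ r, a * r * a = 0) → a = 0) (I : Ideal S)
    (a : S) (ha : a ∈ I) (ha0 : a ≠ 0) : ∃ b ∈ I, ¬ IsNilpotent b := by
  by_contra! hcon
  have hnil : ∀ r, IsNilpotent (a * r) := by
    intro r
    obtain ⟨k, hk⟩ := hcon (r * a) (I.mul_mem_left r ha)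
    refine ⟨k + 1, ?_⟩
    have : (a * r) ^ (k + 1) = a * (r * a) ^ k * r := by
      clear hk
      induction k with
      | zero => simp
      | succ k ih => rw [pow_succ, ih, pow_succ]; simp only [mul_assoc]
    rw [this, hk, mul_zero, zero_mul]
  obtain ⟨b, ⟨⟨u, rfl⟩, hb0⟩, hmax⟩ := exists_max_ideal (fun z : S => lAnn z)
    (fun z => (∃ u, z = a * u) ∧ z ≠ 0) ⟨a, ⟨1, by simp⟩, ha0⟩
  apply hb0
  apply hS
  intro r
  have hn : IsNilpotent (a * u * r) := by rw [mul_assoc]; exact hnil _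
  by_contra hne
  have hkey : ∀ k, (a * u * r) ^ (k + 1) ≠ 0 := by
    intro k
    induction k with
    | zero =>
      intro h
      apply hne
      rw [zero_add, pow_one] at h
      rw [h, zero_mul]
    | succ k ih =>
      intro h
      have hle : lAnn (a * u) ≤ lAnn ((a * u * r) ^ (k + 1)) := by
        intro x hx
        rw [mem_lAnn] at *
        rw [pow_succ', ← mul_assoc, ← mul_assoc, hx, zero_mul, zero_mul]
      have := hmax _ ⟨⟨u * r * (a * u * r) ^ k, by rw [pow_succ']; simp only [mul_assoc]⟩, ih⟩ hle
      have h2 : a * u * r ∈ lAnn ((a * u * r) ^ (k + 1)) := by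
        rw [mem_lAnn, ← pow_succ', h]
      exact hne (this h2)
  obtain ⟨k, hk⟩ := hn
  exact hkey k (by rw [pow_succ, hk, zero_mul])

theorem exists_good (hS : ∀ a : S, (∀ r, a * r * a = 0) → a = 0) (I : Ideal S)
    (a : S) (ha : a ∈ I) (ha0 : a ≠ 0) :
    ∃ e ∈ I, e ≠ 0 ∧ ∀ x, x * e * e = 0 → x * e = 0 := by
  obtain ⟨b, hb, hnil⟩ := exists_nonnil hS I a ha ha0
  obtain ⟨k, -, hk⟩ := exists_max_ideal (fun k : ℕ => lAnn (b ^ (k + 1))) (fun _ => True) ⟨0, trivial⟩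
  refine ⟨b ^ (k + 1), ?_, fun h => hnil ⟨_, h⟩, ?_⟩
  · rw [pow_succ]; exact I.mul_mem_left _ hb
  · intro x hx
    have hle : lAnn (b ^ (k + 1)) ≤ lAnn (b ^ (2 * k + 1 + 1)) := by
      intro y hy
      rw [mem_lAnn] at *
      rw [show 2 * k + 1 + 1 = (k + 1) + (k + 1) by ring, pow_add, ← mul_assoc, hy, zero_mul]
    apply hk _ trivial hle
    rw [mem_lAnn, show 2 * k + 1 + 1 = (k + 1) + (k + 1) by ring, pow_add, ← mul_assoc, hx]

theorem goldie [IsNoetherianRing Sᵐᵒᵖ] (hS : ∀ a : S, (∀ r, a * r * a = 0) → a = 0) (E : Ideal S)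
    (hE : EssL E) : ∃ c ∈ E, (∀ r, c * r = 0 → r = 0) ∧ (∀ r, r * c = 0 → r = 0) := by
  obtain ⟨c, ⟨hcE, hc⟩, hmax⟩ := exists_max_ideal (S := Sᵐᵒᵖ) (fun c : S => rlAnn c)
    (fun c => c ∈ E ∧ ∀ x, x * c * c = 0 → x * c = 0) ⟨0, E.zero_mem, by simp⟩
  have hl : ∀ r, r * c = 0 → r = 0 := by
    intro r hr
    by_contra hr0
    obtain ⟨t, ht, htE⟩ := hE r hr0
    obtain ⟨e, he, he0, hee⟩ := exists_good hS (lAnn c ⊓ E) (t * r)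
      ⟨by rw [SetLike.mem_coe, mem_lAnn, mul_assoc, hr, mul_zero], htE⟩ ht
    have hec : e * c = 0 := he.1
    have hsplit : ∀ x, x * (c + e) = 0 → x * c = 0 ∧ x * e = 0 := by
      intro x hx
      have h1 : x * c * c = 0 := by
        have : x * (c + e) * c = 0 := by rw [hx, zero_mul]
        rw [mul_add, add_mul, mul_assoc x e c, hec, mul_zero, add_zero] at this
        exact this
      have h2 := hc x h1
      rw [mul_add, h2, zero_add] at hx
      exact ⟨h2, hx⟩
    have hgood : ∀ x, x * (c + e) * (c + e) = 0 → x * (c + e) = 0 := by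
      intro x hx
      obtain ⟨h1, h2⟩ := hsplit _ hx
      have h3 : x * c * c = 0 := by
        rw [mul_add, add_mul, mul_assoc x e c, hec, mul_zero, add_zero] at h1
        exact h1
      have h4 := hc x h3
      rw [mul_add, h4, zero_add] at h2
      rw [mul_add, h4, hee x h2, add_zero]
    have hle : rlAnn c ≤ rlAnn (c + e) := by
      intro x hx y hy
      exact hx y (hsplit y hy).1
    have hle' := hmax (c + e) ⟨E.add_mem hcE he.2, hgood⟩ hle
    have hmem : MulOpposite.op e ∈ rlAnn (c + e) := fun y hy => (hsplit y hy).2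
    have h0 : e * e = 0 := hle' hmem e hec
    apply he0
    have := hee 1 (by rw [one_mul, h0])
    rwa [one_mul] at this
  refine ⟨c, hcE, ?_, hl⟩
  intro y hy
  apply singular_eq_zero hS
  intro s hs
  obtain ⟨r, u, h1, h2⟩ := essL_principal c hl s hs
  exact ⟨r, h1, by rw [mem_lAnn, h2, mul_assoc, hy, mul_zero]⟩

end Goldie

section Transfer

variable {S : Type*} [Ring S]

theorem mk_eq_zero_iff (I : TwoSidedIdeal S) (x : S) : I.ringCon.mk' x = 0 ↔ x ∈ I := by
  rw [← TwoSidedIdeal.mem_ker, TwoSidedIdeal.ker_ringCon_mk']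

/-- semiprime two-sided ideals -/
def SemiP (I : TwoSidedIdeal S) : Prop := ∀ a, (∀ r, a * r * a ∈ I) → a ∈ I

theorem noeth_quot [IsNoetherianRing S] (I : TwoSidedIdeal S) :
    IsNoetherianRing I.ringCon.Quotient :=
  isNoetherianRing_of_surjective S _ I.ringCon.mk' I.ringCon.mk'_surjective

theorem noeth_quot_op [IsNoetherianRing Sᵐᵒᵖ] (I : TwoSidedIdeal S) :
    IsNoetherianRing (I.ringCon.Quotient)ᵐᵒᵖ := by
  refine isNoetherianRing_of_surjective Sᵐᵒᵖ _ (RingHom.op I.ringCon.mk') ?_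
  intro x
  obtain ⟨y, hy⟩ := I.ringCon.mk'_surjective x.unop
  refine ⟨MulOpposite.op y, ?_⟩
  apply MulOpposite.unop_injective
  simpa using hy

theorem goldieMod [IsNoetherianRing S] [IsNoetherianRing Sᵐᵒᵖ] (I : TwoSidedIdeal S)
    (hI : SemiP I) (E : Ideal S) (hE : ∀ s, s ∉ I → ∃ r, r * s ∉ I ∧ r * s ∈ E) :
    ∃ c ∈ E, RegularMod I c := by
  have := noeth_quot I
  have := noeth_quot_op I
  have hsurj := I.ringCon.mk'_surjective
  obtain ⟨c', hc', h1, h2⟩ := goldie (S := I.ringCon.Quotient) (by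
    intro a ha
    obtain ⟨a, rfl⟩ := hsurj a
    rw [mk_eq_zero_iff]
    apply hI
    intro r
    rw [← mk_eq_zero_iff, map_mul, map_mul]
    exact ha _) (E.map I.ringCon.mk') (by
    intro s hs
    obtain ⟨s, rfl⟩ := hsurj s
    rw [Ne, mk_eq_zero_iff] at hs
    obtain ⟨r, hr, hr'⟩ := hE s hs
    refine ⟨I.ringCon.mk' r, ?_, ?_⟩
    · rwa [← map_mul, Ne, mk_eq_zero_iff]
    · rw [← map_mul]
      exact Ideal.mem_map_of_mem _ hr')
  obtain ⟨c, hc, rfl⟩ := (Ideal.mem_map_iff_of_surjective _ hsurj).mp hc'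
  refine ⟨c, hc, ?_, ?_⟩
  · intro r hr
    rw [← mk_eq_zero_iff, map_mul] at hr
    rw [← mk_eq_zero_iff]
    exact h1 _ hr
  · intro r hr
    rw [← mk_eq_zero_iff, map_mul] at hr
    rw [← mk_eq_zero_iff]
    exact h2 _ hr

theorem essMod [IsNoetherianRing S] (T : TwoSidedIdeal S) (g : S) (hg : RegularMod T g)
    (s : S) (hs : s ∉ T) : ∃ r u, r * s ∉ T ∧ r * s - u * g ∈ T := by
  have := noeth_quot T
  have hsurj := T.ringCon.mk'_surjective
  obtain ⟨r, u, h1, h2⟩ := essL_principal (T.ringCon.mk' g) (by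
    intro r hr
    obtain ⟨r, rfl⟩ := hsurj r
    rw [← map_mul, mk_eq_zero_iff] at hr
    rw [mk_eq_zero_iff]
    exact hg.2 _ hr) (T.ringCon.mk' s) (by rwa [Ne, mk_eq_zero_iff])
  obtain ⟨r, rfl⟩ := hsurj r
  obtain ⟨u, rfl⟩ := hsurj u
  refine ⟨r, u, ?_, ?_⟩
  · rwa [← map_mul, Ne, mk_eq_zero_iff] at h1
  · rw [← mk_eq_zero_iff, map_sub, map_mul, map_mul, h2, sub_self]

theorem prime_mul {T X : TwoSidedIdeal S} (hT : T.IsPrime) (hX : ¬ X ≤ T) (u : S) (hu : u ∉ T) :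
    ∃ x ∈ X, x * u ∉ T := by
  by_contra! h
  apply hX
  intro a ha
  exact (hT.2 a u (fun r => h _ (X.mul_mem_right _ _ ha))).resolve_right hu

theorem keyL [IsNoetherianRing S] [IsNoetherianRing Sᵐᵒᵖ] (T X Q0 : TwoSidedIdeal S)
    (hT : T.IsPrime) (hX : ¬ X ≤ T) (hQ0 : ∀ x, x ∈ Q0 ↔ x ∈ X ∧ x ∈ T) (hs : SemiP Q0)
    (g : S) (hg : RegularMod T g) (x : S) (hx : x ∈ X) :
    ∃ c u, RegularMod Q0 c ∧ u ∈ X ∧ c * x - u * g ∈ Q0 := by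
  let E : Ideal S :=
    { carrier := {c | ∃ u ∈ X, c * x - u * g ∈ Q0}
      zero_mem' := ⟨0, X.zero_mem, by simp [Q0.zero_mem]⟩
      add_mem' := by
        rintro a b ⟨u, hu, h1⟩ ⟨v, hv, h2⟩
        refine ⟨u + v, X.add_mem hu hv, ?_⟩
        have := Q0.add_mem h1 h2
        rwa [show a * x - u * g + (b * x - v * g) = (a + b) * x - (u + v) * g by noncomm_ring] at this
      smul_mem' := by
        rintro a b ⟨u, hu, h1⟩
        refine ⟨a * u, X.mul_mem_left _ _ hu, ?_⟩
        have := Q0.mul_mem_left a _ h1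
        rwa [show a * (b * x - u * g) = (a • b) * x - (a * u) * g by
          rw [smul_eq_mul]; noncomm_ring] at this }
  obtain ⟨c, ⟨u, hu, h⟩, hc⟩ := goldieMod Q0 hs E (by
    intro s hs
    by_cases hsx : s * x ∈ T
    · refine ⟨1, by simpa using hs, 0, X.zero_mem, ?_⟩
      rw [hQ0]
      simp only [one_mul, zero_mul, sub_zero]
      exact ⟨X.mul_mem_left _ _ hx, hsx⟩
    · obtain ⟨r, u, h1, h2⟩ := essMod T g hg _ hsx
      have hu : u ∉ T := by
        intro hu
        apply h1
        have := T.add_mem h2 (T.mul_mem_right u g hu)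
        rwa [sub_add_cancel] at this
      obtain ⟨y, hy, hyu⟩ := prime_mul hT hX u hu
      have h3 : y * (r * (s * x) - u * g) ∈ T := T.mul_mem_left _ _ h2
      have h4 : y * (r * (s * x) - u * g) ∈ X := X.mul_mem_right _ _ hy
      rw [show y * (r * (s * x) - u * g) = y * r * s * x - y * u * g by noncomm_ring] at h3 h4
      refine ⟨y * r, ?_, y * u, X.mul_mem_right _ _ hy, (hQ0 _).2 ⟨h4, h3⟩⟩
      intro h5
      have h6 : y * r * s * x ∈ T := T.mul_mem_right _ _ ((hQ0 _).1 h5).2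
      have h7 := T.sub_mem h6 h3
      rw [sub_sub_cancel] at h7
      exact hyu (hg.2 _ h7))
  exact ⟨c, u, hc, hu, h⟩

theorem keyL2 [IsNoetherianRing S] [IsNoetherianRing Sᵐᵒᵖ] {ι : Type*} (F : Finset ι)
    (T X : ι → TwoSidedIdeal S) (Q0 : TwoSidedIdeal S)
    (hT : ∀ i ∈ F, (T i).IsPrime) (hX : ∀ i ∈ F, ¬ X i ≤ T i)
    (hQ0 : ∀ x, (∀ i ∈ F, x ∈ T i) → x ∈ Q0) (hQ1 : ∀ i ∈ F, Q0 ≤ T i) (hs : SemiP Q0)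
    (D : Ideal S) (hD : ∀ i ∈ F, ∀ x ∈ X i, x ∈ D) : ∃ c ∈ D, RegularMod Q0 c := by
  apply goldieMod Q0 hs
  intro s hs
  have : ∃ i ∈ F, s ∉ T i := by
    by_contra! h
    exact hs (hQ0 s h)
  obtain ⟨i, hi, hsi⟩ := this
  obtain ⟨x, hx, hxs⟩ := prime_mul (hT i hi) (hX i hi) s hsi
  exact ⟨x, fun h => hxs (hQ1 i hi h), hD i hi _ ((X i).mul_mem_right _ _ hx)⟩

theorem regularMod_op {I : TwoSidedIdeal S} {g : Sᵐᵒᵖ} :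
    RegularMod I.op g ↔ RegularMod I g.unop := by
  constructor
  · rintro ⟨h1, h2⟩
    refine ⟨fun r hr => ?_, fun r hr => ?_⟩
    · exact TwoSidedIdeal.mem_op_iff.1 (h2 (MulOpposite.op r) (TwoSidedIdeal.mem_op_iff.2 hr))
    · exact TwoSidedIdeal.mem_op_iff.1 (h1 (MulOpposite.op r) (TwoSidedIdeal.mem_op_iff.2 hr))
  · rintro ⟨h1, h2⟩
    refine ⟨fun r hr => ?_, fun r hr => ?_⟩
    · exact TwoSidedIdeal.mem_op_iff.2 (h2 _ (TwoSidedIdeal.mem_op_iff.1 hr))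
    · exact TwoSidedIdeal.mem_op_iff.2 (h1 _ (TwoSidedIdeal.mem_op_iff.1 hr))

theorem le_of_op {I J : TwoSidedIdeal S} (h : I.op ≤ J.op) : I ≤ J := fun x hx =>
  TwoSidedIdeal.mem_op_iff.1 (h (TwoSidedIdeal.mem_op_iff.2 hx : MulOpposite.op x ∈ I.op))

theorem isPrime_op {I : TwoSidedIdeal S} (h : I.IsPrime) : I.op.IsPrime := by
  refine ⟨fun ht => h.1 ?_, fun a b hab => ?_⟩
  · apply le_antisymm le_top
    apply le_of_op
    rw [ht]
    exact le_top
  · rw [TwoSidedIdeal.mem_op_iff, TwoSidedIdeal.mem_op_iff, or_comm]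
    apply h.2
    intro r
    have := TwoSidedIdeal.mem_op_iff.1 (hab (MulOpposite.op r))
    simpa [mul_assoc] using this

theorem semiP_op {I : TwoSidedIdeal S} (h : SemiP I) : SemiP I.op := by
  intro a ha
  rw [TwoSidedIdeal.mem_op_iff]
  apply h
  intro r
  have := TwoSidedIdeal.mem_op_iff.1 (ha (MulOpposite.op r))
  simpa [mul_assoc] using this

theorem noeth_op_op [IsNoetherianRing S] : IsNoetherianRing Sᵐᵒᵖᵐᵒᵖ :=
  isNoetherianRing_of_ringEquiv S (RingEquiv.opOp S)

theorem keyR [IsNoetherianRing S] [IsNoetherianRing Sᵐᵒᵖ] (T X Q0 : TwoSidedIdeal S)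
    (hT : T.IsPrime) (hX : ¬ X ≤ T) (hQ0 : ∀ x, x ∈ Q0 ↔ x ∈ X ∧ x ∈ T) (hs : SemiP Q0)
    (g : S) (hg : RegularMod T g) (x : S) (hx : x ∈ X) :
    ∃ c u, RegularMod Q0 c ∧ u ∈ X ∧ x * c - g * u ∈ Q0 := by
  have := noeth_op_op (S := S)
  obtain ⟨c, u, hc, hu, h⟩ := keyL T.op X.op Q0.op (isPrime_op hT) (fun h => hX (le_of_op h))
    (fun x => by simp only [TwoSidedIdeal.mem_op_iff]; exact hQ0 _) (semiP_op hs)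
    (MulOpposite.op g) (regularMod_op.2 hg) (MulOpposite.op x) (TwoSidedIdeal.mem_op_iff.2 hx)
  exact ⟨c.unop, u.unop, regularMod_op.1 hc, TwoSidedIdeal.mem_op_iff.1 hu,
    TwoSidedIdeal.mem_op_iff.1 h⟩

theorem keyR2 [IsNoetherianRing S] [IsNoetherianRing Sᵐᵒᵖ] {ι : Type*} (F : Finset ι)
    (T X : ι → TwoSidedIdeal S) (Q0 : TwoSidedIdeal S)
    (hT : ∀ i ∈ F, (T i).IsPrime) (hX : ∀ i ∈ F, ¬ X i ≤ T i)
    (hQ0 : ∀ x, (∀ i ∈ F, x ∈ T i) → x ∈ Q0) (hQ1 : ∀ i ∈ F, Q0 ≤ T i) (hs : SemiP Q0)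
    (D : Ideal Sᵐᵒᵖ) (hD : ∀ i ∈ F, ∀ x ∈ X i, MulOpposite.op x ∈ D) :
    ∃ c, MulOpposite.op c ∈ D ∧ RegularMod Q0 c := by
  have := noeth_op_op (S := S)
  obtain ⟨c, hc, h⟩ := keyL2 F (fun i => (T i).op) (fun i => (X i).op) Q0.op
    (fun i hi => isPrime_op (hT i hi)) (fun i hi h => hX i hi (le_of_op h))
    (fun x hx => TwoSidedIdeal.mem_op_iff.2
      (hQ0 _ fun i hi => TwoSidedIdeal.mem_op_iff.1 (hx i hi)))
    (fun i hi x hx => TwoSidedIdeal.mem_op_iff.2 (hQ1 i hi (TwoSidedIdeal.mem_op_iff.1 hx)))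
    (semiP_op hs) D (fun i hi x hx => hD i hi x.unop (TwoSidedIdeal.mem_op_iff.1 hx))
  exact ⟨c.unop, hc, regularMod_op.1 h⟩

theorem mem_biInf {ι : Type*} {F : Finset ι} {T : ι → TwoSidedIdeal S} {x : S} :
    x ∈ (⨅ i ∈ F, T i) ↔ ∀ i ∈ F, x ∈ T i := by
  rw [TwoSidedIdeal.mem_iInf]
  refine forall_congr' fun i => ?_
  by_cases h : i ∈ F
  · simp [h]
  · simp only [h, iInf_false, false_imp_iff, iff_true]
    exact TwoSidedIdeal.mem_top _

theorem exists_decomp (F : Finset ℕ) (T : ℕ → TwoSidedIdeal S) :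
    ∃ G : Finset ℕ, G ⊆ F ∧ (⨅ i ∈ F, T i) = (⨅ i ∈ G, T i) ∧
      ∀ i ∈ G, ¬ (⨅ k ∈ G.erase i, T k) ≤ T i := by
  induction F using Finset.strongInduction with
  | H F ih =>
    by_cases h : ∀ i ∈ F, ¬ (⨅ k ∈ F.erase i, T k) ≤ T i
    · exact ⟨F, subset_rfl, rfl, h⟩
    · push Not at h
      obtain ⟨i, hi, hle⟩ := h
      obtain ⟨G, hG, h1, h2⟩ := ih (F.erase i) (Finset.erase_ssubset hi)
      refine ⟨G, hG.trans (Finset.erase_subset _ _), ?_, h2⟩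
      rw [← h1]
      apply TwoSidedIdeal.ext
      intro x
      constructor
      · intro hx
        rw [mem_biInf] at *
        exact fun k hk => hx k (Finset.mem_of_mem_erase hk)
      · intro hx
        have hxi := hle hx
        rw [mem_biInf] at *
        intro k hk
        by_cases hki : k = i
        · rw [hki]; exact hxi
        · exact hx k (Finset.mem_erase.2 ⟨hki, hk⟩)

theorem exists_link [IsNoetherianRing S] [IsNoetherianRing Sᵐᵒᵖ] (n : ℕ)
    (T U : ℕ → TwoSidedIdeal S) (hT : ∀ i, (T i).IsPrime) (hU : ∀ i, (U i).IsPrime)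
    (A : TwoSidedIdeal S)
    (h : LinkVia (⨅ i ∈ Finset.range n, T i) (⨅ i ∈ Finset.range n, U i) A) :
    ∃ i j B, LinkVia (T i) (U j) B := by
  have semi : ∀ (F : Finset ℕ) (T : ℕ → TwoSidedIdeal S), (∀ i, (T i).IsPrime) →
      SemiP (⨅ i ∈ F, T i) := by
    intro F T hT a ha
    rw [mem_biInf]
    intro i hi
    have := (hT i).2 a a (fun r => mem_biInf.1 (ha r) i hi)
    exact this.elim id id
  obtain ⟨F, -, hF, hF'⟩ := exists_decomp (Finset.range n) T
  obtain ⟨G, -, hG, hG'⟩ := exists_decomp (Finset.range n) U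
  rw [hF, hG] at h
  clear hF hG
  have sF := semi F T hT
  have sG := semi G U hU
  have split : ∀ (F : Finset ℕ) (T : ℕ → TwoSidedIdeal S) (i : ℕ), i ∈ F → ∀ x,
      x ∈ (⨅ k ∈ F, T k) ↔ x ∈ (⨅ k ∈ F.erase i, T k) ∧ x ∈ T i := by
    intro F T i hi x
    simp only [mem_biInf]
    constructor
    · intro h
      exact ⟨fun k hk => h k (Finset.mem_of_mem_erase hk), h i hi⟩
    · rintro ⟨h1, h2⟩ k hk
      by_cases hki : k = i
      · rw [hki]; exact h2
      · exact h1 k (Finset.mem_erase.2 ⟨hki, hk⟩)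
  have splitF := split F T
  have splitG := split G U
  have gF : ∀ x, (∀ i ∈ F, x ∈ T i) → x ∈ (⨅ k ∈ F, T k) := fun x hx => mem_biInf.2 hx
  have gG : ∀ x, (∀ i ∈ G, x ∈ U i) → x ∈ (⨅ k ∈ G, U k) := fun x hx => mem_biInf.2 hx
  have leF : ∀ i ∈ F, (⨅ k ∈ F, T k) ≤ T i := fun i hi x hx => mem_biInf.1 hx i hi
  have leG : ∀ i ∈ G, (⨅ k ∈ G, U k) ≤ U i := fun i hi x hx => mem_biInf.1 hx i hi
  generalize (⨅ k ∈ F, T k) = Q0 at *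
  generalize (⨅ k ∈ G, U k) = P0 at *
  set X : ℕ → TwoSidedIdeal S := fun i => ⨅ k ∈ F.erase i, T k with hXdef
  set Y : ℕ → TwoSidedIdeal S := fun i => ⨅ k ∈ G.erase i, U k with hYdef
  obtain ⟨hmul, hlt, htf⟩ := h
  obtain ⟨f, hf, hfA⟩ := SetLike.exists_of_lt hlt
  have hi : ∃ i ∈ F, ∃ x ∈ X i, x * f ∉ A := by
    by_contra! hcon
    obtain ⟨c, hc, hreg⟩ := keyL2 F T X Q0 (fun i _ => hT i) hF' gF leF sF
      { carrier := {c | c * f ∈ A}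
        zero_mem' := by
          show 0 * f ∈ A
          rw [zero_mul]; exact A.zero_mem
        add_mem' := by
          intro a b ha hb
          show (a + b) * f ∈ A
          rw [add_mul]; exact A.add_mem ha hb
        smul_mem' := by
          intro a b hb
          show a * b * f ∈ A
          rw [mul_assoc]; exact A.mul_mem_left _ _ hb } hcon
    exact (htf f hf hfA).2 c hreg hc
  obtain ⟨i, hi, x0, hx0, hxf⟩ := hi
  have hxfm : x0 * f ∈ Q0 ⊓ P0 := (Q0 ⊓ P0).mul_mem_left _ _ hf
  have hj : ∃ j ∈ G, ∃ y ∈ Y j, x0 * f * y ∉ A := by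
    by_contra! hcon
    obtain ⟨c, hc, hreg⟩ := keyR2 G U Y P0 (fun i _ => hU i) hG' gG leG sG
      { carrier := {c | x0 * f * c.unop ∈ A}
        zero_mem' := by
          show x0 * f * 0 ∈ A
          rw [mul_zero]; exact A.zero_mem
        add_mem' := by
          intro a b ha hb
          show x0 * f * (a.unop + b.unop) ∈ A
          rw [mul_add]; exact A.add_mem ha hb
        smul_mem' := by
          intro a b hb
          show x0 * f * (b.unop * a.unop) ∈ A
          rw [← mul_assoc]; exact A.mul_mem_right _ _ hb } hcon
    exact (htf _ hxfm hxf).1 c hreg hc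
  obtain ⟨j, hj, y0, hy0, hxfy⟩ := hj
  let B : TwoSidedIdeal S := TwoSidedIdeal.mk'
    {z | z ∈ T i ⊓ U j ∧ ∀ x ∈ X i, ∀ y ∈ Y j, x * z * y ∈ A}
    ⟨TwoSidedIdeal.zero_mem _, fun x _ y _ => by rw [mul_zero, zero_mul]; exact A.zero_mem⟩
    (by
      rintro a b ⟨ha, ha'⟩ ⟨hb, hb'⟩
      refine ⟨TwoSidedIdeal.add_mem _ ha hb, fun x hx y hy => ?_⟩
      rw [mul_add, add_mul]
      exact A.add_mem (ha' x hx y hy) (hb' x hx y hy))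
    (by
      rintro a ⟨ha, ha'⟩
      refine ⟨TwoSidedIdeal.neg_mem _ ha, fun x hx y hy => ?_⟩
      rw [mul_neg, neg_mul]
      exact A.neg_mem (ha' x hx y hy))
    (by
      rintro a b ⟨hb, hb'⟩
      refine ⟨TwoSidedIdeal.mul_mem_left _ _ _ hb, fun x hx y hy => ?_⟩
      rw [← mul_assoc]
      exact hb' _ ((X i).mul_mem_right _ _ hx) y hy)
    (by
      rintro a b ⟨hb, hb'⟩
      refine ⟨TwoSidedIdeal.mul_mem_right _ _ _ hb, fun x hx y hy => ?_⟩
      rw [← mul_assoc, mul_assoc _ b y]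
      exact hb' x hx _ ((Y j).mul_mem_left _ _ hy))
  have memB : ∀ z, z ∈ B ↔ z ∈ T i ⊓ U j ∧ ∀ x ∈ X i, ∀ y ∈ Y j, x * z * y ∈ A := by
    intro z
    exact TwoSidedIdeal.mem_mk' _ _ _ _ _ _ _
  have hXT : ∀ x ∈ X i, ∀ t ∈ T i, x * t ∈ Q0 := fun x hx t ht =>
    (splitF i hi _).2 ⟨(X i).mul_mem_right _ _ hx, (T i).mul_mem_left _ _ ht⟩
  have hUY : ∀ u ∈ U j, ∀ y ∈ Y j, u * y ∈ P0 := fun u hu y hy =>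
    (splitG j hj _).2 ⟨(Y j).mul_mem_left _ _ hy, (U j).mul_mem_right _ _ hu⟩
  have hle : B ≤ T i ⊓ U j := fun z hz => ((memB z).1 hz).1
  have hfTU : f ∈ T i ⊓ U j := by
    rw [TwoSidedIdeal.mem_inf] at hf ⊢
    exact ⟨leF i hi hf.1, leG j hj hf.2⟩
  refine ⟨i, j, B, ?_, ?_, ?_⟩
  · intro q hq p hp
    rw [memB, TwoSidedIdeal.mem_inf]
    refine ⟨⟨(T i).mul_mem_right _ _ hq, (U j).mul_mem_left _ _ hp⟩, fun x hx y hy => ?_⟩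
    have := hmul _ (hXT x hx q hq) _ (hUY p hp y hy)
    simpa only [mul_assoc] using this
  · refine lt_of_le_not_ge hle fun hge => hxfy ?_
    exact ((memB f).1 (hge hfTU)).2 x0 hx0 y0 hy0
  · intro z hz hzB
    have hz' := (TwoSidedIdeal.mem_inf S).1 hz
    have hxzy : ∀ x ∈ X i, ∀ y ∈ Y j, x * z * y ∈ Q0 ⊓ P0 := fun x hx y hy =>
      (TwoSidedIdeal.mem_inf S).2 ⟨Q0.mul_mem_right _ _ (hXT x hx z hz'.1), by
        rw [mul_assoc]; exact P0.mul_mem_left _ _ (hUY z hz'.2 y hy)⟩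
    constructor
    · intro g hg hgB
      apply hzB
      rw [memB]
      refine ⟨hz, fun x hx y hy => ?_⟩
      by_contra hA
      obtain ⟨c, u, hc, hu, hcu⟩ := keyR (U j) (Y j) P0 (hU j) (hG' j hj) (splitG j hj) sG g hg y hy
      refine (htf _ (hxzy x hx y hy) hA).1 c hc ?_
      have h1 := ((memB _).1 hgB).2 x hx u hu
      have h2 := hmul _ (hXT x hx z hz'.1) _ hcu
      have h3 := A.add_mem h2 h1
      rwa [show x * z * (y * c - g * u) + x * (z * g) * u = x * z * y * c by noncomm_ring] at h3
    · intro g hg hgB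
      apply hzB
      rw [memB]
      refine ⟨hz, fun x hx y hy => ?_⟩
      by_contra hA
      obtain ⟨c, u, hc, hu, hcu⟩ := keyL (T i) (X i) Q0 (hT i) (hF' i hi) (splitF i hi) sF g hg x hx
      refine (htf _ (hxzy x hx y hy) hA).2 c hc ?_
      have h1 := ((memB _).1 hgB).2 u hu y hy
      have h2 := hmul _ hcu _ (hUY z hz'.2 y hy)
      have h3 := A.add_mem h2 h1
      rwa [show (c * x - u * g) * (z * y) + u * (g * z) * y = c * (x * z * y) by noncomm_ring] at h3

theorem mem_mapEquiv {τ : S ≃+* S} {I : TwoSidedIdeal S} {x : S} :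
    x ∈ TwoSidedIdeal.mapEquiv τ I ↔ τ.symm x ∈ I := TwoSidedIdeal.mem_comap _

theorem apply_mem_mapEquiv {τ : S ≃+* S} {I : TwoSidedIdeal S} {x : S} :
    τ x ∈ TwoSidedIdeal.mapEquiv τ I ↔ x ∈ I := by
  rw [mem_mapEquiv, RingEquiv.symm_apply_apply]

theorem regularMod_map {τ : S ≃+* S} {I : TwoSidedIdeal S} {g : S}
    (h : RegularMod (TwoSidedIdeal.mapEquiv τ I) g) : RegularMod I (τ.symm g) := by
  refine ⟨fun r hr => ?_, fun r hr => ?_⟩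
  · rw [← apply_mem_mapEquiv (τ := τ)]
    apply h.1
    rw [mem_mapEquiv, map_mul, RingEquiv.symm_apply_apply]
    exact hr
  · rw [← apply_mem_mapEquiv (τ := τ)]
    apply h.2
    rw [mem_mapEquiv, map_mul, RingEquiv.symm_apply_apply]
    exact hr

theorem isPrime_map (τ : S ≃+* S) {I : TwoSidedIdeal S} (h : I.IsPrime) :
    (TwoSidedIdeal.mapEquiv τ I).IsPrime := by
  refine ⟨fun ht => h.1 ?_, fun a b hab => ?_⟩
  · apply le_antisymm le_top
    intro x _
    rw [← apply_mem_mapEquiv (τ := τ), ht]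
    exact TwoSidedIdeal.mem_top _
  · rw [mem_mapEquiv, mem_mapEquiv]
    apply h.2
    intro r
    have := hab (τ r)
    rwa [mem_mapEquiv, map_mul, map_mul, RingEquiv.symm_apply_apply] at this

theorem link_map (τ : S ≃+* S) {Q P A : TwoSidedIdeal S} (h : LinkVia Q P A) :
    LinkVia (TwoSidedIdeal.mapEquiv τ Q) (TwoSidedIdeal.mapEquiv τ P)
      (TwoSidedIdeal.mapEquiv τ A) := by
  obtain ⟨h1, h2, h3⟩ := h
  refine ⟨fun q hq p hp => ?_, ?_, ?_⟩
  · rw [mem_mapEquiv] at *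
    rw [map_mul]
    exact h1 _ hq _ hp
  · obtain ⟨f, hf, hfA⟩ := SetLike.exists_of_lt h2
    refine lt_of_le_not_ge (fun x hx => ?_) (fun hge => hfA ?_)
    · rw [TwoSidedIdeal.mem_inf, mem_mapEquiv, mem_mapEquiv, ← TwoSidedIdeal.mem_inf]
      exact h2.le (mem_mapEquiv.1 hx)
    · rw [← apply_mem_mapEquiv (τ := τ)]
      apply hge
      rw [TwoSidedIdeal.mem_inf, apply_mem_mapEquiv, apply_mem_mapEquiv, ← TwoSidedIdeal.mem_inf]
      exact hf
  · intro f hf hfA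
    rw [TwoSidedIdeal.mem_inf, mem_mapEquiv, mem_mapEquiv, ← TwoSidedIdeal.mem_inf] at hf
    rw [mem_mapEquiv] at hfA
    obtain ⟨h4, h5⟩ := h3 _ hf hfA
    refine ⟨fun g hg => ?_, fun g hg => ?_⟩
    · rw [mem_mapEquiv, map_mul]
      exact h4 _ (regularMod_map hg)
    · rw [mem_mapEquiv, map_mul]
      exact h5 _ (regularMod_map hg)

theorem map_pow_add (σ : S ≃+* S) (a b : ℕ) (I : TwoSidedIdeal S) :
    TwoSidedIdeal.mapEquiv (σ ^ (a + b)) I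
      = TwoSidedIdeal.mapEquiv (σ ^ a) (TwoSidedIdeal.mapEquiv (σ ^ b) I) := by
  apply TwoSidedIdeal.ext
  intro x
  rw [mem_mapEquiv, mem_mapEquiv, mem_mapEquiv, pow_add]
  rfl

theorem map_pow_mul (σ : S ≃+* S) (n : ℕ) (I : TwoSidedIdeal S)
    (h : TwoSidedIdeal.mapEquiv (σ ^ n) I = I) (a : ℕ) :
    TwoSidedIdeal.mapEquiv (σ ^ (a * n)) I = I := by
  induction a with
  | zero =>
    apply TwoSidedIdeal.ext
    intro x
    rw [mem_mapEquiv, zero_mul, pow_zero]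
    rfl
  | succ a ih => rw [Nat.succ_mul, map_pow_add, h, ih]

end Transfer

/-- converse: if the σ-invariant parts `Q⁰`, `P⁰` of σ-semistable prime
ideals `Q`, `P` are linked, then for every `i ≥ 0` there is `j ≥ 0` with a link
`σⁱ(Q) ⇝ σʲ(P)`. -/
theorem link_of_invariant_parts_gives_links [Ring R] [IsNoetherianRing R]
    [IsNoetherianRing Rᵐᵒᵖ] (σ : R ≃+* R) (Q P : TwoSidedIdeal R)
    (hQ : Q.IsPrime) (hP : P.IsPrime)
    (n : ℕ) (hn : 1 ≤ n)
    (hQn : TwoSidedIdeal.mapEquiv (σ ^ n) Q = Q)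
    (hPn : TwoSidedIdeal.mapEquiv (σ ^ n) P = P)
    (Q0 P0 : TwoSidedIdeal R)
    (hQ0 : Q0 = ⨅ i ∈ Finset.range n, TwoSidedIdeal.mapEquiv (σ ^ i) Q)
    (hP0 : P0 = ⨅ i ∈ Finset.range n, TwoSidedIdeal.mapEquiv (σ ^ i) P)
    (hlink : ∃ A : TwoSidedIdeal R, LinkVia Q0 P0 A) :
    ∀ i : ℕ, ∃ j : ℕ, ∃ B : TwoSidedIdeal R,
      LinkVia (TwoSidedIdeal.mapEquiv (σ ^ i) Q) (TwoSidedIdeal.mapEquiv (σ ^ j) P) B := by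
  obtain ⟨A, hA⟩ := hlink
  rw [hQ0, hP0] at hA
  obtain ⟨a, b, B, hB⟩ := exists_link n (fun i => TwoSidedIdeal.mapEquiv (σ ^ i) Q)
    (fun i => TwoSidedIdeal.mapEquiv (σ ^ i) P) (fun i => isPrime_map _ hQ)
    (fun i => isPrime_map _ hP) A hA
  intro i
  obtain ⟨m, rfl⟩ : ∃ m, n = m + 1 := ⟨n - 1, by omega⟩
  have h := link_map (σ ^ (i + a * m)) hB
  simp only [← map_pow_add] at h
  rw [show i + a * m + a = i + a * (m + 1) by ring, map_pow_add σ i,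
    map_pow_mul σ (m + 1) Q hQn] at h
  exact ⟨_, _, h⟩
end
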